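/- arXiv:math/0405245 — 2 statements merged into one kernel-verified Lean document; each statement's English description precedes it below -/
import Mathlib

section
/- Let ξ ∈ ℂ with Re(ξ) > 0 and let p ∈ ℝ be fixed. Then, as the even positive integer H tends to infinity, the lattice sums c_ξ(p) converge to the principal square root reciprocal of ξ: lim_{H→∞, H even} ∑_{z=−H²/2}^{H²/2−1} (1/H)·exp(−ξπ(z/H + (i/ξ)p)²) = ξ^{−1/2}, where ξ^{−1/2} = exp(−(1/2)·Log ξ) with Log the principal branch of the logarithm. -/
/-!
The sum over the window is the integral of a step function. If a lattice of mesh `ε → 0` and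
windows exhausting the line are given, the step functions `x ↦ f (ε⌊x / ε⌋)`, cut off outside the
window, converge to `f` at every continuity point of `f`, so the lattice sums converge to `∫ f` by
dominated convergence as soon as the local suprema of `‖f‖` are integrable. For the Gaussian
`f x = exp (-ξπ(x + (i/ξ)p)²)` completing the square shows that `∫ f` does not depend on `p`.
-/

open MeasureTheory Filter Topology

section StepFunction

variable {E : Type*} [NormedAddCommGroup E]

theorem abs_sub_floor_div_mul_le {ε : ℝ} (hε : 0 < ε) (x : ℝ) : |x - ⌊x / ε⌋ * ε| ≤ ε :=
  (abs_of_nonneg (Int.sub_floor_div_mul_nonneg x hε)).trans_le (Int.sub_floor_div_mul_lt x hε).le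

theorem measurable_floor_div (ε : ℝ) : Measurable fun x : ℝ => ⌊x / ε⌋ :=
  (measurable_id.div_const ε).floor

theorem volume_floor_div_preimage_singleton {ε : ℝ} (hε : 0 < ε) (z : ℤ) :
    volume ((fun x : ℝ => ⌊x / ε⌋) ⁻¹' {z}) = ENNReal.ofReal ε := by
  have preimage_eq : (fun x : ℝ => ⌊x / ε⌋) ⁻¹' {z} = Set.Ico (z * ε) ((z + 1) * ε) := by
    ext x
    simp only [Set.mem_preimage, Set.mem_singleton_iff, Int.floor_eq_iff, Set.mem_Ico,
      le_div_iff₀ hε, div_lt_iff₀ hε]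
  rw [preimage_eq, Real.volume_Ico]
  ring_nf

theorem setIntegral_comp_floor_div [NormedSpace ℝ E] [CompleteSpace E] {ε : ℝ} (hε : 0 < ε)
    (s : Finset ℤ) (u : ℤ → E) :
    ∫ x in (fun x : ℝ => ⌊x / ε⌋) ⁻¹' s, u ⌊x / ε⌋ = ∑ z ∈ s, ε • u z := by
  have map_singleton (z : ℤ) :
      (volume.map fun x : ℝ => ⌊x / ε⌋) {z} = ENNReal.ofReal ε := by
    rw [Measure.map_apply (measurable_floor_div ε) (measurableSet_singleton z),
      volume_floor_div_preimage_singleton hε]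
  have integrableOn : IntegrableOn u s (volume.map fun x : ℝ => ⌊x / ε⌋) := by
    rw [← Set.biUnion_of_singleton (s : Set ℤ), integrableOn_finite_biUnion s.finite_toSet]
    exact fun z _ => integrableOn_singleton (hx := by simp [map_singleton])
  rw [← setIntegral_map s.measurableSet StronglyMeasurable.of_discrete.aestronglyMeasurable
    (measurable_floor_div ε).aemeasurable, setIntegral_finset s integrableOn]
  simp only [measureReal_def, map_singleton, ENNReal.toReal_ofReal hε.le]

/-- The step function on the cells `[zε, (z + 1)ε)` of the lattice `εℤ` that samples `f` at the left
endpoint of each cell with `z ∈ s` and vanishes on the other cells. Its integral is the lattice sum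
of `f` over `s`. -/
noncomputable def latticeStep (ε : ℝ) (s : Finset ℤ) (f : ℝ → E) : ℝ → E :=
  ((fun x : ℝ => ⌊x / ε⌋) ⁻¹' s).indicator fun x => f (⌊x / ε⌋ * ε)

theorem stronglyMeasurable_latticeStep (ε : ℝ) (s : Finset ℤ) (f : ℝ → E) :
    StronglyMeasurable (latticeStep ε s f) := by
  have : StronglyMeasurable fun z : ℤ => f (z * ε) := .of_discrete
  exact (this.comp_measurable (measurable_floor_div ε)).indicator
    (measurable_floor_div ε s.measurableSet)

theorem integral_latticeStep [NormedSpace ℝ E] [CompleteSpace E] {ε : ℝ} (hε : 0 < ε)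
    (s : Finset ℤ) (f : ℝ → E) :
    ∫ x, latticeStep ε s f x = ∑ z ∈ s, ε • f (z * ε) := by
  rw [← setIntegral_comp_floor_div hε s fun z => f (z * ε),
    ← integral_indicator (measurable_floor_div ε s.measurableSet), latticeStep]

theorem norm_latticeStep_le (ε : ℝ) (s : Finset ℤ) (f : ℝ → E) (x : ℝ) :
    ‖latticeStep ε s f x‖ ≤ ‖f (⌊x / ε⌋ * ε)‖ :=
  norm_indicator_le_norm_self _ x

theorem latticeStep_of_floor_div_mem {ε : ℝ} {s : Finset ℤ} {x : ℝ} (hx : ⌊x / ε⌋ ∈ s)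
    (f : ℝ → E) : latticeStep ε s f x = f (⌊x / ε⌋ * ε) := by
  rw [latticeStep, Set.indicator_of_mem]
  exact hx

end StepFunction

section RiemannSum

/-- The finite windows `s i` in the lattices `ε i • ℤ`, given by integer coordinates, exhaust the
real line along `l`: the mesh tends to zero from above, and every bounded interval eventually has
all its lattice points in the window. -/
structure IsLatticeExhaustion {ι : Type*} (l : Filter ι) (ε : ι → ℝ) (s : ι → Finset ℤ) :
    Prop where
  tendsto_mesh : Tendsto ε l (𝓝[>] 0)
  eventually_mem : ∀ R : ℝ, ∀ᶠ i in l, ∀ z : ℤ, |z * ε i| ≤ R → z ∈ s i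

variable {ι : Type*} {l : Filter ι} {ε : ι → ℝ} {s : ι → Finset ℤ}
  {E : Type*} [NormedAddCommGroup E]

theorem tendsto_floor_div_mul (hε : Tendsto ε l (𝓝[>] 0)) (x : ℝ) :
    Tendsto (fun i => ⌊x / ε i⌋ * ε i) l (𝓝 x) := by
  rw [tendsto_iff_norm_sub_tendsto_zero]
  refine squeeze_zero' (Eventually.of_forall fun _ => norm_nonneg _) ?_
    (tendsto_nhds_of_tendsto_nhdsWithin hε)
  filter_upwards [hε.eventually self_mem_nhdsWithin] with i hi
  rw [norm_sub_rev]
  exact abs_sub_floor_div_mul_le hi x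

theorem IsLatticeExhaustion.eventually_floor_div_mem (h : IsLatticeExhaustion l ε s) (x : ℝ) :
    ∀ᶠ i in l, ⌊x / ε i⌋ ∈ s i := by
  filter_upwards [h.eventually_mem (|x| + 1),
    (tendsto_floor_div_mul h.tendsto_mesh x).abs.eventually_le_const (lt_add_one |x|)]
    with i mem_of_abs_le abs_le
  exact mem_of_abs_le _ abs_le

theorem IsLatticeExhaustion.tendsto_latticeStep (h : IsLatticeExhaustion l ε s) {f : ℝ → E} {x : ℝ}
    (hf : ContinuousAt f x) : Tendsto (fun i => latticeStep (ε i) (s i) f x) l (𝓝 (f x)) := by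
  refine (hf.tendsto.comp (tendsto_floor_div_mul h.tendsto_mesh x)).congr' ?_
  filter_upwards [h.eventually_floor_div_mem x] with i hi
  exact (latticeStep_of_floor_div_mem hi f).symm

theorem IsLatticeExhaustion.tendsto_sum_integral [l.IsCountablyGenerated] [NormedSpace ℝ E]
    [CompleteSpace E] (h : IsLatticeExhaustion l ε s) {f : ℝ → E} {g : ℝ → ℝ} {δ : ℝ}
    (hf : ∀ᵐ x, ContinuousAt f x) (hg : Integrable g) (hδ : 0 < δ)
    (hfg : ∀ x y, |x - y| ≤ δ → ‖f y‖ ≤ g x) :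
    Tendsto (fun i => ∑ z ∈ s i, ε i • f (z * ε i)) l (𝓝 (∫ x, f x)) := by
  have mesh_pos : ∀ᶠ i in l, 0 < ε i := h.tendsto_mesh.eventually self_mem_nhdsWithin
  have mesh_le : ∀ᶠ i in l, ε i ≤ δ :=
    (tendsto_nhds_of_tendsto_nhdsWithin h.tendsto_mesh).eventually_le_const hδ
  have dominated : ∀ᶠ i in l, ∀ᵐ x, ‖latticeStep (ε i) (s i) f x‖ ≤ g x := by
    filter_upwards [mesh_pos, mesh_le] with i hi hiδ
    exact Eventually.of_forall fun x => (norm_latticeStep_le _ _ f x).trans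
      (hfg x _ ((abs_sub_floor_div_mul_le hi x).trans hiδ))
  have integral_tendsto : Tendsto (fun i => ∫ x, latticeStep (ε i) (s i) f x) l (𝓝 (∫ x, f x)) :=
    tendsto_integral_filter_of_dominated_convergence g
      (Eventually.of_forall fun i => (stronglyMeasurable_latticeStep _ _ f).aestronglyMeasurable)
      dominated hg (hf.mono fun _ hx => h.tendsto_latticeStep hx)
  exact integral_tendsto.congr' (mesh_pos.mono fun i hi => integral_latticeStep hi (s i) f)

end RiemannSum

section Gaussian

variable {ι : Type*} {l : Filter ι} [l.IsCountablyGenerated] {ε : ι → ℝ} {s : ι → Finset ℤ}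

theorem quadratic_le_of_abs_sub_le_one {a : ℝ} (ha : a < 0) (c d : ℝ) {x y : ℝ}
    (hxy : |x - y| ≤ 1) :
    a * y ^ 2 + c * y + d ≤ a / 4 * x ^ 2 + (d - a / 2 - c ^ 2 / (2 * a)) := by
  have hx : x ^ 2 / 2 - 1 ≤ y ^ 2 := by
    nlinarith [sq_nonneg (x - 2 * y), (sq_le_one_iff_abs_le_one (x - y)).mpr hxy]
  have complete_square : a * y ^ 2 + c * y + d =
      a / 2 * y ^ 2 + d - c ^ 2 / (2 * a) + a / 2 * (y + c / a) ^ 2 := by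
    field_simp [ha.ne]
    ring
  nlinarith [mul_nonneg_of_nonpos_of_nonpos ha.le (sub_nonpos.mpr hx),
    mul_nonneg (neg_nonneg.mpr ha.le) (sq_nonneg (y + c / a))]

theorem norm_cexp_quadratic_le {b : ℂ} (hb : b.re < 0) (c d : ℂ) {x y : ℝ} (hxy : |x - y| ≤ 1) :
    ‖Complex.exp (b * y ^ 2 + c * y + d)‖ ≤
      Real.exp (b.re / 4 * x ^ 2) * Real.exp (d.re - b.re / 2 - c.re ^ 2 / (2 * b.re)) := by
  rw [Complex.norm_exp, ← Real.exp_add, ← Complex.ofReal_pow, Complex.add_re, Complex.add_re,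
    Complex.re_mul_ofReal, Complex.re_mul_ofReal]
  exact Real.exp_le_exp.mpr (quadratic_le_of_abs_sub_le_one hb c.re d.re hxy)

theorem IsLatticeExhaustion.tendsto_sum_cexp_quadratic (h : IsLatticeExhaustion l ε s) {b : ℂ}
    (hb : b.re < 0) (c d : ℂ) :
    Tendsto (fun i => ∑ z ∈ s i, ε i • Complex.exp
        (b * ((z * ε i : ℝ) : ℂ) ^ 2 + c * ((z * ε i : ℝ) : ℂ) + d)) l
      (𝓝 ((Real.pi / -b) ^ (1 / 2 : ℂ) * Complex.exp (d - c ^ 2 / (4 * b)))) := by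
  rw [← integral_cexp_quadratic hb c d]
  have envelope_integrable : Integrable fun x : ℝ => Real.exp (b.re / 4 * x ^ 2) *
      Real.exp (d.re - b.re / 2 - c.re ^ 2 / (2 * b.re)) := by
    simpa using (integrable_exp_neg_mul_sq (b := -(b.re / 4)) (by linarith)).mul_const _
  have continuous : Continuous fun x : ℝ => Complex.exp (b * (x : ℂ) ^ 2 + c * x + d) := by
    fun_prop
  exact h.tendsto_sum_integral (Eventually.of_forall fun _ => continuous.continuousAt)
    envelope_integrable one_pos (fun _ _ => norm_cexp_quadratic_le hb c d)

theorem inv_cpow_eq_exp_neg_mul_log {ξ : ℂ} (hξ : ξ ∈ Complex.slitPlane) (a : ℂ) :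
    ξ⁻¹ ^ a = Complex.exp (-a * Complex.log ξ) := by
  rw [Complex.cpow_def_of_ne_zero (inv_ne_zero (Complex.slitPlane_ne_zero hξ)),
    Complex.log_inv ξ (Complex.slitPlane_arg_ne_pi hξ), neg_mul_comm, mul_comm]

theorem IsLatticeExhaustion.tendsto_sum_cexp_shifted_gaussian (h : IsLatticeExhaustion l ε s)
    {ξ : ℂ} (hξ : 0 < ξ.re) (p : ℂ) :
    Tendsto (fun i => ∑ z ∈ s i, ε i • Complex.exp
        (-(ξ * Real.pi * (((z * ε i : ℝ) : ℂ) + Complex.I / ξ * p) ^ 2))) l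
      (𝓝 (Complex.exp (-(1 / 2) * Complex.log ξ))) := by
  have hξ_slit : ξ ∈ Complex.slitPlane := Or.inl hξ
  have hξ_ne : ξ ≠ 0 := Complex.slitPlane_ne_zero hξ_slit
  have hb : (-(Real.pi * ξ)).re < 0 := by
    rw [Complex.neg_re, Complex.re_ofReal_mul]
    exact neg_neg_of_pos (mul_pos Real.pi_pos hξ)
  have exponent_eq (x : ℂ) : -(ξ * Real.pi * (x + Complex.I / ξ * p) ^ 2) =
      -(Real.pi * ξ) * x ^ 2 + -(2 * Real.pi * Complex.I * p) * x + Real.pi * p ^ 2 / ξ := by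
    field_simp
    linear_combination -p ^ 2 * Complex.I_sq
  have width_eq : (Real.pi : ℂ) / -(-(Real.pi * ξ)) = ξ⁻¹ := by
    field_simp
  have shift_eq : Real.pi * p ^ 2 / ξ -
      (-(2 * Real.pi * Complex.I * p)) ^ 2 / (4 * -(Real.pi * ξ)) = 0 := by
    field_simp
    linear_combination 4 * Real.pi * p ^ 2 * Complex.I_sq
  have quadratic_tendsto := h.tendsto_sum_cexp_quadratic hb
    (-(2 * Real.pi * Complex.I * p)) (Real.pi * p ^ 2 / ξ)
  rw [width_eq, shift_eq, Complex.exp_zero, mul_one, inv_cpow_eq_exp_neg_mul_log hξ_slit]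
    at quadratic_tendsto
  simpa only [exponent_eq] using quadratic_tendsto

end Gaussian

theorem isLatticeExhaustion_Ico_sq_div_two :
    IsLatticeExhaustion atTop (fun H : ℕ => (H : ℝ)⁻¹)
      fun H => Finset.Ico (-((H : ℤ) ^ 2 / 2)) ((H : ℤ) ^ 2 / 2) where
  tendsto_mesh := tendsto_inv_atTop_nhdsGT_zero.comp tendsto_natCast_atTop_atTop
  eventually_mem R := by
    filter_upwards [eventually_ge_atTop 1,
      tendsto_natCast_atTop_atTop.eventually_ge_atTop (2 * R + 2)] with H hH hR z hz
    have one_le : (1 : ℝ) ≤ H := by exact_mod_cast hH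
    have abs_le : |(z : ℝ)| ≤ R * H := by
      rwa [abs_mul, abs_inv, Nat.abs_cast, ← div_eq_mul_inv, div_le_iff₀ (by linarith)] at hz
    have abs_add_one_mul_two_le : (|z| + 1) * 2 ≤ (H : ℤ) ^ 2 := by
      have : (|(z : ℝ)| + 1) * 2 ≤ (H : ℝ) ^ 2 := by nlinarith
      exact_mod_cast this
    have abs_lt_half : |z| < (H : ℤ) ^ 2 / 2 :=
      Int.add_one_le_iff.mp ((Int.le_ediv_iff_mul_le two_pos).mpr abs_add_one_mul_two_le)
    obtain ⟨neg_lt, lt⟩ := abs_lt.mp abs_lt_half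
    exact Finset.mem_Ico.mpr ⟨neg_lt.le, lt⟩

theorem lattice_gaussian_sum_tendsto_general (ξ : ℂ) (hξ : 0 < ξ.re) (p : ℂ) :
    Tendsto
      (fun H : ℕ => (Finset.Ico (-((H : ℤ) ^ 2 / 2)) ((H : ℤ) ^ 2 / 2)).sum
        (fun z : ℤ => (H : ℂ)⁻¹ *
          Complex.exp (-(ξ * Real.pi * ((z : ℂ) / (H : ℂ) + Complex.I / ξ * p) ^ 2))))
      atTop (𝓝 (Complex.exp (-(1 / 2) * Complex.log ξ))) := by
  simpa [div_eq_mul_inv] using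
    isLatticeExhaustion_Ico_sq_div_two.tendsto_sum_cexp_shifted_gaussian hξ p

/-- For `Re ξ > 0` and a fixed real `p`, the lattice sums
`c_ξ(p) = ∑_{z=−H²/2}^{H²/2−1} (1/H)·exp(−ξπ(z/H + (i/ξ)p)²)` converge, as the even
positive integer `H` tends to infinity, to the principal square-root reciprocal
`ξ^{−1/2} = exp(−(1/2)·Log ξ)`. -/
theorem lattice_gaussian_sum_tendsto (ξ : ℂ) (hξ : 0 < ξ.re) (p : ℝ) :
    Filter.Tendsto
      (fun H : ℕ => (Finset.Ico (-((H : ℤ) ^ 2 / 2)) ((H : ℤ) ^ 2 / 2)).sum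
        (fun z : ℤ => (H : ℂ)⁻¹ *
          Complex.exp (-(ξ * Real.pi * ((z : ℂ) / (H : ℂ) + Complex.I / ξ * (p : ℂ)) ^ 2))))
      (Filter.atTop ⊓ Filter.principal {H : ℕ | Even H})
      (nhds (Complex.exp (-(1 / 2) * Complex.log ξ))) := by
  exact (lattice_gaussian_sum_tendsto_general ξ hξ p).mono_left inf_le_left
end

section
/- Let H be a positive even integer and let m be a nonzero integer with m | 2H². Define φ_{im}(x) = exp(−iπmx²) on L_H. Then for every p = t/H ∈ L_H with t ∈ ℤ and m | t, (Fφ_{im})(p) = c_{im}·exp(iπp²/m), where c_{im} = √(m/2)·(1 + i^{2H²/m})/(1 + i) if m > 0, and c_{im} = √(−m/2)·(1 + (−i)^{2H²/(−m)})/(1 − i) if m < 0. -/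
/-- The canonical integer representative `z` of `u ∈ ℤ/H²ℤ` with `−H²/2 ≤ z < H²/2`,
so that the lattice point of `L_H` corresponding to `u` is `εz = z/H`. -/
def latLift (H : ℕ) (u : ZMod (H ^ 2)) : ℤ :=
  if (u.val : ℤ) < ((H : ℤ) ^ 2) / 2 then (u.val : ℤ) else (u.val : ℤ) - (H : ℤ) ^ 2

/-- The lattice point `εz ∈ L_H ⊆ ℚ ⊆ ℂ` corresponding to `u ∈ ℤ/H²ℤ`. -/
noncomputable def latC (H : ℕ) (u : ZMod (H ^ 2)) : ℂ :=
  (latLift H u : ℂ) / (H : ℂ)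

/-- The infinitesimal Fourier transform `(Fφ)(p) = ∑_{x ∈ L_H} ε · exp(−2πipx) · φ(x)`. -/
noncomputable def Ftrans (H : ℕ) [NeZero H] (φ : ZMod (H ^ 2) → ℂ) (p : ZMod (H ^ 2)) : ℂ :=
  ∑ x : ZMod (H ^ 2),
    (H : ℂ)⁻¹ * Complex.exp (-(2 * Real.pi * Complex.I * latC H p * latC H x)) * φ x

/-! Completing the square in `exp(-πi(mx² + 2px))` shifts `x` by `p/m ∈ L_H`, and the Fourier
transform becomes `exp(πip²/m)` times the quadratic Gauss sum `H⁻¹ ∑ exp(-πimr²/N)` over `r` mod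
`N = H²`. For `m > 0` that sum is evaluated by Landsberg–Schaar reciprocity: the behaviour of
Jacobi's theta function at a rational cusp is governed by the cusp's Gauss sum, and `τ ↦ -1/τ`
exchanges the cusps `-m/N` and `N/m`. In the dual sum `∑ exp(πi(N/m)k²)` over `k` mod `m`, the ratio
`N/m` is `n/2` for the integer `n = 2N/m`, so its terms alternate between `1` and `i^n`. Complex
conjugation gives the case `m < 0`. -/

open Complex Filter Topology
open scoped Real

lemma mul_cpow_of_arg_add_mem {x y : ℂ} (hx : x ≠ 0) (hy : y ≠ 0)
    (h : arg x + arg y ∈ Set.Ioc (-π) π) (s : ℂ) : (x * y) ^ s = x ^ s * y ^ s := by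
  rw [cpow_def_of_ne_zero (mul_ne_zero hx hy), cpow_def_of_ne_zero hx, cpow_def_of_ne_zero hy,
    log_mul hx hy h, add_mul, exp_add]

lemma ofReal_mul_cpow {r : ℝ} (hr : 0 < r) (z s : ℂ) : (r * z) ^ s = (r : ℂ) ^ s * z ^ s := by
  rcases eq_or_ne z 0 with rfl | hz
  · rcases eq_or_ne s 0 with rfl | hs
    · simp
    · simp [zero_cpow hs]
  · refine mul_cpow_of_arg_add_mem (ofReal_ne_zero.mpr hr.ne') hz ?_ s
    rw [arg_ofReal_of_nonneg hr.le, zero_add]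
    exact arg_mem_Ioc z

lemma ofReal_cpow_half {r : ℝ} (hr : 0 ≤ r) : (r : ℂ) ^ (1 / 2 : ℂ) = √r := by
  rw [Real.sqrt_eq_rpow, ofReal_cpow hr]
  norm_num

lemma sq_ofReal_sqrt {r : ℝ} (hr : 0 ≤ r) : (√r : ℂ) ^ 2 = r := by
  rw [← ofReal_pow, Real.sq_sqrt hr]

lemma neg_I_mul_ofReal_cpow_half {r : ℝ} (hr : 0 < r) :
    (-I * r) ^ (1 / 2 : ℂ) = √r * cexp (-(π / 4 * I)) := by
  rw [mul_comm, ofReal_mul_cpow hr, ofReal_cpow_half hr.le, cpow_def_of_ne_zero (by simp),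
    log_neg_I]
  ring_nf

/-- The quadratic phase `k ↦ exp(πiτk²)`: for `τ` in the upper half-plane the summand of Jacobi's
theta series, for real `τ` the summand of a quadratic Gauss sum. -/
noncomputable def quadraticPhase (τ : ℂ) (k : ℤ) : ℂ := cexp (π * I * τ * k ^ 2)

lemma quadraticPhase_add (σ τ : ℂ) (k : ℤ) :
    quadraticPhase (σ + τ) k = quadraticPhase σ k * quadraticPhase τ k := by
  rw [quadraticPhase, quadraticPhase, quadraticPhase, ← exp_add]
  ring_nf

lemma quadraticPhase_add_mul (τ : ℂ) (r n k : ℤ) :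
    quadraticPhase τ (r + n * k)
      = quadraticPhase τ r * jacobiTheta₂_term k (n * r * τ) (n ^ 2 * τ) := by
  rw [quadraticPhase, quadraticPhase, jacobiTheta₂_term, ← exp_add]
  push_cast
  ring_nf

lemma conj_quadraticPhase (τ : ℂ) (k : ℤ) :
    starRingEnd ℂ (quadraticPhase τ k) = quadraticPhase (-starRingEnd ℂ τ) k := by
  simp [quadraticPhase, ← exp_conj]

lemma quadraticPhase_periodic {m : ℤ} {N : ℕ} [NeZero N] (h : Even (m * N)) :
    Function.Periodic (quadraticPhase (m / N)) N := by
  intro k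
  have hN : (N : ℂ) ≠ 0 := NeZero.ne _
  obtain ⟨c, hc⟩ := h
  have hc' : (m : ℂ) * N = c + c := by exact_mod_cast hc
  refine exp_eq_exp_iff_exists_int.mpr ⟨m * k + c, ?_⟩
  push_cast
  field_simp
  linear_combination (N : ℂ) * hc'

lemma summable_quadraticPhase {τ : ℂ} (hτ : 0 < im τ) : Summable (quadraticPhase τ) := by
  refine ((summable_jacobiTheta₂_term_iff 0 τ).mpr hτ).congr fun k => ?_
  simp only [quadraticPhase, jacobiTheta₂_term]
  ring_nf

lemma jacobiTheta_eq_tsum_quadraticPhase (τ : ℂ) :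
    jacobiTheta τ = ∑' k, quadraticPhase τ k :=
  tsum_congr fun k => by rw [quadraticPhase]; ring_nf

lemma tendsto_jacobiTheta₂_comap_im_atTop (z : ℂ) :
    Tendsto (jacobiTheta₂ z) (comap im atTop) (𝓝 1) := by
  have him : Tendsto im (comap im atTop) atTop := tendsto_comap
  have hbound := summable_pow_mul_jacobiTheta₂_term_bound |im z| one_pos 0
  simp only [pow_zero, one_mul] at hbound
  rw [← tsum_ite_eq (0 : ℤ) fun _ => (1 : ℂ)]
  refine tendsto_tsum_of_dominated_convergence hbound (fun k => ?_) ?_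
  · split_ifs with hk
    · simpa [jacobiTheta₂_term, hk] using tendsto_const_nhds
    · rw [tendsto_zero_iff_norm_tendsto_zero]
      simp only [norm_jacobiTheta₂_term]
      refine Real.tendsto_exp_atBot.comp (tendsto_atBot_add_const_right _ _ ?_)
      have hk' : 0 < π * (k : ℝ) ^ 2 := by positivity
      exact him.const_mul_atTop_of_neg (by linarith)
  · filter_upwards [him.eventually_ge_atTop 1] with τ hτ k
    simpa only [one_mul] using norm_jacobiTheta₂_term_le one_pos le_rfl hτ k

lemma jacobiTheta_eq_inversion (τ : ℂ) :
    jacobiTheta τ = 1 / (-I * τ) ^ (1 / 2 : ℂ) * jacobiTheta (-1 / τ) := by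
  simpa [jacobiTheta_eq_jacobiTheta₂] using jacobiTheta₂_functional_equation 0 τ

/-- The theta series `∑ f(k) exp(πiτk²)` with coefficients `f`. For
`f = quadraticPhase σ` with `σ` rational, hence `f` periodic, it is Jacobi's theta function
recentred at the cusp `σ`. -/
noncomputable def twistedTheta (f : ℤ → ℂ) (τ : ℂ) : ℂ := ∑' k, f k * quadraticPhase τ k

lemma twistedTheta_quadraticPhase (σ τ : ℂ) :
    twistedTheta (quadraticPhase σ) τ = jacobiTheta (σ + τ) := by
  simp only [twistedTheta, jacobiTheta_eq_tsum_quadraticPhase, quadraticPhase_add]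

lemma periodic_eq_of_intCast_eq {α : Type*} {f : ℤ → α} {n : ℕ} (hf : Function.Periodic f n)
    {a b : ℤ} (h : (a : ZMod n) = b) : f a = f b := by
  obtain ⟨q, hq⟩ := (ZMod.intCast_eq_intCast_iff_dvd_sub a b n).mp h
  rw [show b = a + q * n by linarith]
  exact (hf.int_mul q a).symm

section Periodic

variable {f : ℤ → ℂ} {n : ℕ} [NeZero n]

lemma summable_periodic_mul (hf : Function.Periodic f n) {g : ℤ → ℂ} (hg : Summable g) :
    Summable fun k => f k * g k := by
  refine (hg.norm.mul_left (∑ x : ZMod n, ‖f x.val‖)).of_norm_bounded fun k => ?_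
  rw [norm_mul, periodic_eq_of_intCast_eq (b := (k : ZMod n).val) hf (by simp)]
  gcongr
  exact Finset.single_le_sum (f := fun x : ZMod n => ‖f x.val‖) (fun _ _ => norm_nonneg _)
    (Finset.mem_univ _)

lemma twistedTheta_eq_sum (hf : Function.Periodic f n) {τ : ℂ} (hτ : 0 < im τ) :
    twistedTheta f τ = ∑ r ∈ Finset.range n,
      f r * (quadraticPhase τ r * jacobiTheta₂ (n * r * τ) (n ^ 2 * τ)) := by
  let e : Fin n × ℤ ≃ ℤ := (Equiv.prodComm _ _).trans (Int.divModEquiv n).symm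
  have he (r : Fin n) (k : ℤ) : e (r, k) = (r : ℕ) + n * k := by
    simp [e, Int.divModEquiv_symm_apply, add_comm, mul_comm]
  have hsum : Summable fun x => f (e x) * quadraticPhase τ (e x) :=
    (summable_periodic_mul hf (summable_quadraticPhase hτ)).comp_injective e.injective
  rw [twistedTheta, ← e.tsum_eq, hsum.tsum_prod, tsum_fintype, Finset.sum_range]
  refine Finset.sum_congr rfl fun r _ => ?_
  rw [jacobiTheta₂, ← tsum_mul_left, ← tsum_mul_left]
  refine tsum_congr fun k => ?_
  have hfk : f (r + n * k) = f r := periodic_eq_of_intCast_eq hf (by simp)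
  rw [he, quadraticPhase_add_mul, hfk]
  simp

lemma quadraticPhase_mul_jacobiTheta₂_inversion {σ : ℂ} (hσ : σ ≠ 0) (r : ℤ) :
    quadraticPhase (-1 / σ) r * jacobiTheta₂ (n * r * (-1 / σ)) (n ^ 2 * (-1 / σ))
      = (-I * σ) ^ (1 / 2 : ℂ) / n * jacobiTheta₂ (r / n) (σ / n ^ 2) := by
  have hn : (n : ℂ) ≠ 0 := NeZero.ne _
  have hroot : (-I * (σ / n ^ 2)) ^ (1 / 2 : ℂ) = (-I * σ) ^ (1 / 2 : ℂ) / n := by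
    have hinv : (0 : ℝ) < ((n : ℝ) ^ 2)⁻¹ := by have := NeZero.pos n; positivity
    rw [show -I * (σ / n ^ 2) = (((n : ℝ) ^ 2)⁻¹ : ℝ) * (-I * σ) by push_cast; ring,
      ofReal_mul_cpow hinv, ofReal_cpow_half hinv.le, Real.sqrt_inv, Real.sqrt_sq n.cast_nonneg]
    push_cast
    ring
  have hphase : -π * I * (r / n : ℂ) ^ 2 / (σ / n ^ 2) = π * I * (-1 / σ) * r ^ 2 := by
    field_simp
  have harg : (r / n : ℂ) / (σ / n ^ 2) = -(n * r * (-1 / σ)) := by field_simp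
  have hmod : -1 / (σ / n ^ 2 : ℂ) = n ^ 2 * (-1 / σ) := by field_simp
  rw [jacobiTheta₂_functional_equation (r / n), hroot, hphase, harg, hmod,
    jacobiTheta₂_neg_left, quadraticPhase]
  field_simp

lemma twistedTheta_inversion (hf : Function.Periodic f n) {σ : ℂ} (hσ : 0 < im σ) :
    twistedTheta f (-1 / σ) = (-I * σ) ^ (1 / 2 : ℂ) / n *
      ∑ r ∈ Finset.range n, f r * jacobiTheta₂ (r / n) (σ / n ^ 2) := by
  have hσ0 : σ ≠ 0 := by rintro rfl; simp at hσ
  have him : 0 < im (-1 / σ) := by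
    rw [neg_div, neg_im, one_div, inv_im, neg_div, neg_neg]
    exact div_pos hσ (normSq_pos.mpr hσ0)
  rw [twistedTheta_eq_sum hf him, Finset.mul_sum]
  refine Finset.sum_congr rfl fun r _ => ?_
  have h := quadraticPhase_mul_jacobiTheta₂_inversion (n := n) hσ0 r
  rw [Int.cast_natCast] at h
  rw [h]
  ring

lemma tendsto_twistedTheta (hf : Function.Periodic f n) :
    Tendsto (fun σ => twistedTheta f (-1 / σ) / (-I * σ) ^ (1 / 2 : ℂ)) (comap im atTop)
      (𝓝 ((∑ r ∈ Finset.range n, f r) / n)) := by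
  have him : Tendsto im (comap im atTop) atTop := tendsto_comap
  have hscale : Tendsto (fun σ : ℂ => σ / n ^ 2) (comap im atTop) (comap im atTop) := by
    refine tendsto_comap_iff.mpr ((him.atTop_div_const (r := (n : ℝ) ^ 2) ?_).congr fun σ => ?_)
    · have := NeZero.pos n; positivity
    · simp [← div_ofReal_im]
  have hlim : Tendsto (fun σ : ℂ => (∑ r ∈ Finset.range n,
      f r * jacobiTheta₂ (r / n) (σ / n ^ 2)) / n) (comap im atTop)
      (𝓝 ((∑ r ∈ Finset.range n, f r * 1) / n)) :=
    (tendsto_finsetSum _ fun r _ =>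
      ((tendsto_jacobiTheta₂_comap_im_atTop _).comp hscale).const_mul _).div_const _
  simp only [mul_one] at hlim
  refine hlim.congr' ?_
  filter_upwards [him.eventually_gt_atTop 0] with σ hσ
  have hroot : (-I * σ) ^ (1 / 2 : ℂ) ≠ 0 := by
    have : σ ≠ 0 := by rintro rfl; simp at hσ
    simp [cpow_eq_zero_iff, this]
  rw [twistedTheta_inversion hf hσ, div_mul_eq_mul_div, mul_div_assoc,
    mul_div_cancel_left₀ _ hroot]

end Periodic

lemma jacobiTheta_cusp_inversion {q T : ℝ} (hq : 0 < q) (hT : 0 < T) :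
    jacobiTheta (-q + -1 / (I * T)) / (-I * (I * T)) ^ (1 / 2 : ℂ)
      = √q * cexp (-(π / 4 * I)) * (jacobiTheta ((q : ℂ)⁻¹ + -1 / (q ^ 2 * (I * T) + q))
          / (-I * (q ^ 2 * (I * T) + q)) ^ (1 / 2 : ℂ)) := by
  have hqC : (q : ℂ) ≠ 0 := ofReal_ne_zero.mpr hq.ne'
  have hTC : (T : ℂ) ≠ 0 := ofReal_ne_zero.mpr hT.ne'
  let w : ℂ := (T⁻¹ : ℝ) + q * I
  have hw_re : 0 < w.re := by simpa [w] using hT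
  have hw : w ≠ 0 := by intro h; simp [h] at hw_re
  have hw_arg := abs_lt.mp (abs_arg_lt_pi_div_two_iff.mpr (Or.inl hw_re))
  have hτ : -I * (-q + -1 / (I * T)) = w := by
    simp only [w, ofReal_inv]
    field_simp
    ring
  have hinv : -1 / (-q + -1 / (I * T)) = (q : ℂ)⁻¹ + -1 / (q ^ 2 * (I * T) + q) := by
    have hden : (q * I * T + 1 : ℂ) ≠ 0 := fun h => by simpa using congrArg re h
    rw [show (-q + -1 / (I * T) : ℂ) = -(q * I * T + 1) / (I * T) by field_simp; ring,
      show (q ^ 2 * (I * T) + q : ℂ) = q * (q * I * T + 1) by ring]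
    field_simp
    ring
  have hσ : -I * (q ^ 2 * (I * T) + q) = (-I * q) * (T * w) := by
    simp only [w, ofReal_inv]
    field_simp
    ring
  have hroot : (-I * (q ^ 2 * (I * T) + q)) ^ (1 / 2 : ℂ)
      = √q * cexp (-(π / 4 * I)) * ((T : ℂ) ^ (1 / 2 : ℂ) * w ^ (1 / 2 : ℂ)) := by
    have harg : arg (-I * q) + arg (T * w) ∈ Set.Ioc (-π) π := by
      rw [arg_mul_real hq, arg_neg_I, arg_real_mul w hT]
      constructor <;> linarith [hw_arg.1, hw_arg.2]
    rw [hσ, mul_cpow_of_arg_add_mem (by simp [hqC]) (mul_ne_zero hTC hw) harg,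
      neg_I_mul_ofReal_cpow_half hq, ofReal_mul_cpow hT]
  have hsq : (√q : ℂ) ≠ 0 := ofReal_ne_zero.mpr (Real.sqrt_pos.mpr hq).ne'
  rw [jacobiTheta_eq_inversion, hτ, hinv, hroot, show -I * (I * T) = T by simp [← mul_assoc]]
  field_simp

lemma sum_range_quadraticPhase_neg_eq_inv {q : ℝ} (hq : 0 < q) {m N : ℕ} [NeZero m] [NeZero N]
    (hN : Function.Periodic (quadraticPhase (-q)) N)
    (hm : Function.Periodic (quadraticPhase (q : ℂ)⁻¹) m) :
    (∑ r ∈ Finset.range N, quadraticPhase (-q) r) / N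
      = √q * cexp (-(π / 4 * I)) * ((∑ k ∈ Finset.range m, quadraticPhase (q : ℂ)⁻¹ k) / m) := by
  have hσ : Tendsto (fun T : ℝ => I * (T : ℂ)) atTop (comap im atTop) :=
    tendsto_comap_iff.mpr (tendsto_id.congr fun T => by simp)
  have hσ' : Tendsto (fun T : ℝ => q ^ 2 * (I * (T : ℂ)) + q) atTop (comap im atTop) := by
    refine tendsto_comap_iff.mpr ((tendsto_id.const_mul_atTop (pow_pos hq 2)).congr fun T => ?_)
    simp [← ofReal_pow]
  have hlim := ((tendsto_twistedTheta hm).comp hσ').const_mul (√q * cexp (-(π / 4 * I)))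
  refine tendsto_nhds_unique ((tendsto_twistedTheta hN).comp hσ) (hlim.congr' ?_)
  filter_upwards [eventually_gt_atTop 0] with T hT
  simpa only [Function.comp_apply, twistedTheta_quadraticPhase]
    using (jacobiTheta_cusp_inversion hq hT).symm

theorem landsberg_schaar_reciprocity {m N : ℕ} [NeZero m] [NeZero N] (h : Even (m * N)) :
    (∑ r ∈ Finset.range N, quadraticPhase (-(m / N)) r) / √N
      = cexp (-(π / 4 * I)) * ((∑ k ∈ Finset.range m, quadraticPhase (N / m) k) / √m) := by
  have hm : (0 : ℝ) < m := Nat.cast_pos.mpr (NeZero.pos m)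
  have hN : (0 : ℝ) < N := Nat.cast_pos.mpr (NeZero.pos N)
  have hperN : Function.Periodic (quadraticPhase (-(m / N : ℝ))) N := by
    have := quadraticPhase_periodic (m := -m) (N := N)
      (by simpa using (mod_cast h : Even (m * N : ℤ)))
    simpa [neg_div] using this
  have hperm : Function.Periodic (quadraticPhase ((m / N : ℝ) : ℂ)⁻¹) m := by
    have := quadraticPhase_periodic (m := N) (N := m) (by rw [mul_comm]; exact_mod_cast h)
    simpa using this
  have heq := sum_range_quadraticPhase_neg_eq_inv (div_pos hm hN) hperN hperm
  have hN_sqrt : (√N : ℂ) ≠ 0 := ofReal_ne_zero.mpr (Real.sqrt_pos.mpr hN).ne'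
  have hm_sq : (m : ℂ) = (√m : ℂ) ^ 2 := by simpa using (sq_ofReal_sqrt hm.le).symm
  have hN_sq : (N : ℂ) = (√N : ℂ) ^ 2 := by simpa using (sq_ofReal_sqrt hN.le).symm
  simp only [Real.sqrt_div hm.le, ofReal_div, ofReal_natCast, inv_div] at heq
  generalize ∑ r ∈ Finset.range N, quadraticPhase (-(m / N)) r = S at heq ⊢
  generalize ∑ k ∈ Finset.range m, quadraticPhase (N / m) k = G at heq ⊢
  rw [hm_sq, hN_sq] at heq
  field_simp at heq ⊢
  linear_combination heq

lemma quadraticPhase_natCast_div_two (n k : ℕ) : quadraticPhase (n / 2) k = I ^ (n * k ^ 2) := by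
  rw [← exp_pi_div_two_mul_I, ← exp_nat_mul, quadraticPhase]
  push_cast
  ring_nf

lemma sum_range_I_pow_mul_sq {m n : ℕ} (h : Even m ∨ 4 ∣ n) :
    ∑ k ∈ Finset.range m, I ^ (n * k ^ 2) = m / 2 * (1 + I ^ n) := by
  rcases h with ⟨j, rfl⟩ | ⟨c, rfl⟩
  · have heven (i : ℕ) : I ^ (n * (i + i) ^ 2) = 1 := by
      rw [show n * (i + i) ^ 2 = 4 * (n * i ^ 2) by ring, pow_mul, I_pow_four, one_pow]
    have hodd (i : ℕ) : I ^ (n * (i + i + 1) ^ 2) = I ^ n := by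
      rw [show n * (i + i + 1) ^ 2 = 4 * (n * (i ^ 2 + i)) + n by ring, pow_add, pow_mul,
        I_pow_four, one_pow, one_mul]
    induction j with
    | zero => simp
    | succ j ih =>
      rw [show j + 1 + (j + 1) = j + j + 1 + 1 by ring, Finset.sum_range_succ,
        Finset.sum_range_succ, ih, heven, hodd]
      push_cast
      ring
  · simp only [mul_assoc, pow_mul, I_pow_four, one_pow, Finset.sum_const, Finset.card_range,
      nsmul_eq_mul]
    ring

lemma exp_neg_pi_div_four_mul_I : cexp (-(π / 4 * I)) = √2 / (1 + I) := by
  have hI : 1 + I ≠ 0 := fun h => by simpa using congrArg re h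
  rw [← neg_mul, exp_mul_I, cos_neg, sin_neg, eq_div_iff hI]
  rw [show (π / 4 : ℂ) = (π / 4 : ℝ) by push_cast; rfl, ← ofReal_cos, ← ofReal_sin,
    Real.cos_pi_div_four, Real.sin_pi_div_four]
  push_cast
  linear_combination (-(√2 : ℂ) / 2) * I_sq

theorem sum_range_quadraticPhase_neg_div {m n N : ℕ} [NeZero N] (hmn : m * n = 2 * N)
    (h : Even (m * N)) :
    ∑ r ∈ Finset.range N, quadraticPhase (-(m / N)) r
      = √(m * N / 2) * (1 + I ^ n) / (1 + I) := by
  have : NeZero m := ⟨by rintro rfl; simp [NeZero.ne] at hmn⟩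
  have hparity : Even m ∨ 4 ∣ n := by
    refine (Nat.even_or_odd m).imp_right fun hm => ?_
    obtain ⟨c, rfl⟩ := (Nat.even_mul.mp h).resolve_left (Nat.not_even_iff_odd.mpr hm)
    have h4 : Nat.Coprime 4 m := Nat.Coprime.pow_left 2 (Nat.coprime_two_left.mpr hm)
    exact h4.dvd_of_dvd_mul_left ⟨c, by linarith⟩
  have hmC : (m : ℂ) ≠ 0 := NeZero.ne _
  have hI : 1 + I ≠ 0 := fun h => by simpa using congrArg re h
  have hmnC : (m * n : ℂ) = 2 * N := by exact_mod_cast hmn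
  have hdual : (N / m : ℂ) = n / 2 := by
    rw [div_eq_div_iff hmC two_ne_zero]
    linear_combination -hmnC
  have hrec := landsberg_schaar_reciprocity h
  simp only [hdual, quadraticPhase_natCast_div_two, sum_range_I_pow_mul_sq hparity,
    exp_neg_pi_div_four_mul_I] at hrec
  have hsqrt : √(m * N / 2 : ℝ) = √m * √N / √2 := by
    rw [Real.sqrt_div (by positivity), Real.sqrt_mul (by positivity)]
  have hm : (√m : ℂ) ^ 2 = m := by simpa using sq_ofReal_sqrt m.cast_nonneg
  have h2 : (√2 : ℂ) ^ 2 = 2 := by simpa using sq_ofReal_sqrt zero_le_two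
  have hmsqrt : (√m : ℂ) ≠ 0 := by simp [NeZero.ne]
  have hNsqrt : (√N : ℂ) ≠ 0 := by simp [NeZero.ne]
  rw [div_eq_iff hNsqrt] at hrec
  rw [hrec, hsqrt, ← hm]
  push_cast
  field_simp
  linear_combination (1 + I ^ n) * h2

lemma intCast_latLift (H : ℕ) [NeZero H] (u : ZMod (H ^ 2)) :
    ((latLift H u : ℤ) : ZMod (H ^ 2)) = u := by
  have h : ((H : ZMod (H ^ 2)) ^ 2) = 0 := by exact_mod_cast ZMod.natCast_self (H ^ 2)
  unfold latLift
  split_ifs <;> simp [h]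

lemma sum_comp_section_add {α : Type*} [AddCommMonoid α] {f : ℤ → α} {n : ℕ} [NeZero n]
    (hf : Function.Periodic f n) {e : ZMod n → ℤ} (he : ∀ x, (e x : ZMod n) = x) (s : ℤ) :
    ∑ x, f (e x + s) = ∑ r ∈ Finset.range n, f r := by
  refine Finset.sum_bij (fun x _ => (x + (s : ZMod n)).val) (fun x _ => ?_) (fun x _ y _ h => ?_)
    (fun r hr => ?_) (fun x _ => ?_)
  · exact Finset.mem_range.mpr (ZMod.val_lt _)
  · exact add_right_cancel (ZMod.val_injective n h)
  · exact ⟨r - s, Finset.mem_univ _, by simpa using ZMod.val_cast_of_lt (Finset.mem_range.mp hr)⟩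
  · exact periodic_eq_of_intCast_eq hf (by simp [he])

lemma Ftrans_imaginary_gaussian {H : ℕ} [NeZero H] {m : ℤ} (h : Even (m * H))
    {p : ZMod (H ^ 2)} (hp : m ∣ latLift H p) :
    Ftrans H (fun x => cexp (-(π * I * m * latC H x ^ 2))) p
      = (H : ℂ)⁻¹ * (∑ r ∈ Finset.range (H ^ 2), quadraticPhase (-(m / H ^ 2)) r)
        * cexp (π * I * latC H p ^ 2 / m) := by
  have hper : Function.Periodic (quadraticPhase (-(m / H ^ 2))) (H ^ 2 : ℕ) := by
    have := quadraticPhase_periodic (m := -m) (N := H ^ 2)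
      (by simpa [pow_two, ← mul_assoc] using h.mul_right (H : ℤ))
    simpa [neg_div] using this
  obtain ⟨s, hs⟩ := hp
  -- Completing the square: `p = ms/H` gives `mx² + 2px = m(x + s/H)² - p²/m`.
  rw [← sum_comp_section_add hper (intCast_latLift H) s, Ftrans, Finset.mul_sum, Finset.sum_mul]
  refine Finset.sum_congr rfl fun x _ => ?_
  rw [mul_assoc, mul_assoc (H : ℂ)⁻¹, quadraticPhase, ← exp_add, ← exp_add]
  congr 2
  simp only [latC, hs]
  push_cast
  field_simp
  ring

lemma inv_mul_sum_range_quadraticPhase {H M : ℕ} [NeZero H] (hH : Even H) (hM : M ∣ 2 * H ^ 2) :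
    (H : ℂ)⁻¹ * ∑ r ∈ Finset.range (H ^ 2), quadraticPhase (-(M / H ^ 2)) r
      = √(M / 2) * (1 + I ^ (2 * (H : ℤ) ^ 2 / M)) / (1 + I) := by
  have hHC : (H : ℂ) ≠ 0 := NeZero.ne _
  have hsum := sum_range_quadraticPhase_neg_div (Nat.mul_div_cancel' hM)
    ((hH.pow_of_ne_zero two_ne_zero).mul_left M)
  have hsqrt : √(M * H ^ 2 / 2 : ℝ) = √(M / 2) * H := by
    rw [mul_div_right_comm, Real.sqrt_mul (by positivity), Real.sqrt_sq H.cast_nonneg]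
  have hquot : 2 * (H : ℤ) ^ 2 / M = (2 * H ^ 2 / M : ℕ) := by push_cast; rfl
  push_cast at hsum
  rw [hsum, hsqrt, hquot, zpow_natCast, ofReal_mul, ofReal_natCast]
  field_simp

/-- For a nonzero integer `m` with `m ∣ 2H²` and `φ_{im}(x) = exp(−iπmx²)`, the
infinitesimal Fourier transform at a lattice point `p = t/H` with `m ∣ t` is
`(Fφ_{im})(p) = c_{im} · exp(iπp²/m)`, with `c_{im}` given by a Gauss-sum formula. -/
theorem fourier_imaginary_gaussian (H : ℕ) [NeZero H] (hH : Even H)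
    (m : ℤ) (hm : m ≠ 0) (hdvd : m ∣ 2 * (H : ℤ) ^ 2)
    (p : ZMod (H ^ 2)) (hp : m ∣ latLift H p) :
    Ftrans H (fun x => Complex.exp (-(Real.pi * Complex.I * (m : ℂ) * latC H x ^ 2))) p
      = (if 0 < m then
            (Real.sqrt ((m : ℝ) / 2) : ℂ) * (1 + Complex.I ^ (2 * (H : ℤ) ^ 2 / m))
              / (1 + Complex.I)
          else
            (Real.sqrt ((-m : ℝ) / 2) : ℂ) * (1 + (-Complex.I) ^ (2 * (H : ℤ) ^ 2 / (-m)))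
              / (1 - Complex.I))
        * Complex.exp (Real.pi * Complex.I * latC H p ^ 2 / (m : ℂ)) := by
  rw [Ftrans_imaginary_gaussian (Even.mul_left (mod_cast hH) m) hp]
  congr 1
  split_ifs with hpos
  · lift m to ℕ using hpos.le
    simpa using inv_mul_sum_range_quadraticPhase hH (by exact_mod_cast hdvd)
  · obtain ⟨M, rfl⟩ : ∃ M : ℕ, m = -(M : ℤ) := ⟨(-m).toNat, by omega⟩
    have h := congrArg (starRingEnd ℂ) (inv_mul_sum_range_quadraticPhase hH (M := M)
      (by rw [neg_dvd] at hdvd; exact_mod_cast hdvd))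
    simp only [map_mul, map_sum, map_div₀, map_inv₀, map_add, map_zpow₀, map_one, conj_I,
      conj_ofReal, map_natCast, conj_quadraticPhase, map_neg, map_pow] at h
    simpa [sub_eq_add_neg, neg_div] using h
end
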